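/- Let n ≥ 1, α > 1/n, and set σ := n − 1/α > 0. Let Ω ⊆ ℝⁿ be open, I ⊆ ℝ an open interval, and let g : Ω × I → ℝ be C² in x and C¹ in t with g > 0, and set u := (σ/(σ+1)) g^{(σ+1)/σ}. Suppose at a point (x,t) that det( g^{1/n} D²g + (1/σ) g^{1/n - 1} ∇g ∇gᵀ ) > 0. Then u satisfies ∂_t u = (det D²u)^α / (1 + |∇u|²)^{((n+2)α−1)/2} at (x,t) if and only if g satisfies ∂_t g = ( det( g^{1/n} D²g + (1/σ) g^{1/n - 1} ∇g ∇gᵀ ) )^α / (1 + g^{2/σ} |∇g|²)^{((n+2)α−1)/2} at (x,t). -/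

import Mathlib

/-!
With `p = (σ + 1)/σ` and `c = σ/(σ + 1) = 1/p`, the chain rule for `u = c g ^ p` gives
`∂u = g ^ (1/σ) ∂g` in every space and time direction. Differentiating once more,
`D²u = g ^ (1/σ) (D²g + (1/σ) g⁻¹ ∇g∇gᵀ) = g ^ (1/σ - 1/n) M`, where `M` is the matrix of the
transformed equation, so `det D²u = g ^ (n/σ - 1) det M`. Since `σ = n - 1/α`, the exponent
`α (n/σ - 1)` equals `1/σ`; hence both sides of the equation for `u` are `g ^ (1/σ) > 0` times the
corresponding sides of the equation for `g`, the two gradient denominators being equal.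
-/

/-- The partial derivative `∂_i f` of a real-valued function on `ℝⁿ`. -/
noncomputable def pd {n : ℕ} (f : (Fin n → ℝ) → ℝ) (i : Fin n) (x : Fin n → ℝ) : ℝ :=
  fderiv ℝ f x (Pi.single i 1)

/-- The Hessian entry `∂_i ∂_j f`. -/
noncomputable def hess {n : ℕ} (f : (Fin n → ℝ) → ℝ) (x : Fin n → ℝ) (i j : Fin n) : ℝ :=
  pd (pd f j) i x

/-- The partial derivatives of a power of a positive function. -/
lemma pd_const_mul_rpow {n : ℕ} {f : (Fin n → ℝ) → ℝ} {x : Fin n → ℝ} (hf : DifferentiableAt ℝ f x)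
    (hpos : 0 < f x) (c p : ℝ) (i : Fin n) :
    pd (fun y => c * f y ^ p) i x = c * p * f x ^ (p - 1) * pd f i x := by
  have h := (hf.hasFDerivAt.rpow_const (p := p) (Or.inl hpos.ne')).const_mul c
  simp only [pd, h.fderiv, smul_apply, smul_eq_mul]
  ring

/-- The Hessian of `(σ/(σ + 1)) f ^ ((σ + 1)/σ)`. The gradient formula is needed on a whole
neighbourhood of `x`, whence the open set `Ω`. -/
lemma hess_const_mul_rpow {n : ℕ} {f : (Fin n → ℝ) → ℝ} {Ω : Set (Fin n → ℝ)} (hΩ : IsOpen Ω)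
    (hf : ContDiffOn ℝ 2 f Ω) (hpos : ∀ y ∈ Ω, 0 < f y) {x : Fin n → ℝ} (hx : x ∈ Ω)
    {σ : ℝ} (hσ : 0 < σ) (i j : Fin n) :
    hess (fun y => (σ/(σ + 1)) * f y ^ ((σ + 1)/σ)) x i j
      = f x ^ (1/σ) * hess f x i j + (1/σ) * f x ^ (1/σ - 1) * pd f i x * pd f j x := by
  have hdiff : ∀ y ∈ Ω, DifferentiableAt ℝ f y := fun y hy =>
    (hf.contDiffAt (hΩ.mem_nhds hy)).differentiableAt (by norm_num)
  have hgrad : pd (fun y => (σ/(σ + 1)) * f y ^ ((σ + 1)/σ)) j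
      =ᶠ[nhds x] fun y => f y ^ (1/σ) * pd f j y := by
    filter_upwards [hΩ.mem_nhds hx] with y hy
    rw [pd_const_mul_rpow (hdiff y hy) (hpos y hy)]
    have h1 : σ/(σ + 1) * ((σ + 1)/σ) = 1 := by field_simp
    have h2 : (σ + 1)/σ - 1 = 1/σ := by field_simp; ring
    rw [h1, h2, one_mul]
  have hpd : DifferentiableAt ℝ (pd f j) x := by
    have h : DifferentiableAt ℝ (fderiv ℝ f) x :=
      ((hf.contDiffAt (hΩ.mem_nhds hx)).fderiv_right (m := 1) (by norm_num)).differentiableAt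
        (by norm_num)
    exact h.clm_apply (differentiableAt_const _)
  have h := ((hdiff x hx).hasFDerivAt.rpow_const (p := 1/σ) (Or.inl (hpos x hx).ne')).mul
    hpd.hasFDerivAt
  unfold hess
  rw [pd, hgrad.fderiv_eq]
  erw [h.fderiv]
  simp only [pd, add_apply, smul_apply, smul_eq_mul]
  ring

/-- for `α > 1/n`, `σ = n - 1/α`, `g > 0` and `u = (σ/(σ+1)) g^{(σ+1)/σ}`,
at a point where `det(g^{1/n} D²g + (1/σ) g^{1/n-1} ∇g∇gᵀ) > 0`, the graph equation of the
`α`-Gauss curvature flow for `u` is equivalent to the transformed equation for `g`. -/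
theorem gcf_transformed_equation (n : ℕ) (hn : 1 ≤ n) (α : ℝ) (hα : 1/(n : ℝ) < α)
    (σ : ℝ) (hσ : σ = (n : ℝ) - 1/α)
    (Ω : Set (Fin n → ℝ)) (hΩ : IsOpen Ω) (I : Set ℝ) (hI : ∃ a b : ℝ, I = Set.Ioo a b)
    (g : (Fin n → ℝ) → ℝ → ℝ)
    (hgx : ∀ t ∈ I, ContDiffOn ℝ 2 (fun x => g x t) Ω)
    (hgt : ∀ x ∈ Ω, ContDiffOn ℝ 1 (fun t => g x t) I)
    (hgpos : ∀ x ∈ Ω, ∀ t ∈ I, 0 < g x t)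
    (u : (Fin n → ℝ) → ℝ → ℝ)
    (hu : ∀ x t, u x t = (σ/(σ + 1)) * g x t ^ ((σ + 1)/σ))
    (x : Fin n → ℝ) (hx : x ∈ Ω) (t : ℝ) (ht : t ∈ I)
    (hdet : 0 < (Matrix.of fun i j : Fin n =>
        g x t ^ (1/(n : ℝ)) * hess (fun y => g y t) x i j
          + (1/σ) * g x t ^ (1/(n : ℝ) - 1) * pd (fun y => g y t) i x
              * pd (fun y => g y t) j x).det) :
    (deriv (fun s => u x s) t
        = (Matrix.of fun i j : Fin n => hess (fun y => u y t) x i j).det ^ α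
            / (1 + ∑ i, (pd (fun y => u y t) i x) ^ 2) ^ ((((n : ℝ) + 2) * α - 1)/2))
      ↔ (deriv (fun s => g x s) t
        = (Matrix.of fun i j : Fin n =>
            g x t ^ (1/(n : ℝ)) * hess (fun y => g y t) x i j
              + (1/σ) * g x t ^ (1/(n : ℝ) - 1) * pd (fun y => g y t) i x
                  * pd (fun y => g y t) j x).det ^ α
            / (1 + g x t ^ (2/σ) * ∑ i, (pd (fun y => g y t) i x) ^ 2)
                ^ ((((n : ℝ) + 2) * α - 1)/2)) := by
  have hn0 : (0 : ℝ) < n := by exact_mod_cast hn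
  have hα0 : 0 < α := lt_trans (by positivity) hα
  have hσ0 : 0 < σ := by
    rw [hσ, sub_pos, one_div_lt hα0 hn0]
    exact hα
  have hg : 0 < g x t := hgpos x hx t ht
  have hIo : IsOpen I := by
    obtain ⟨a, b, rfl⟩ := hI
    exact isOpen_Ioo
  have hc : σ/(σ + 1) * ((σ + 1)/σ) = 1 := by field_simp
  have hp : (σ + 1)/σ - 1 = 1/σ := by field_simp; ring
  have hu_x : (fun y => u y t) = fun y => (σ/(σ + 1)) * g y t ^ ((σ + 1)/σ) :=
    funext fun y => hu y t
  have hu_t : (fun s => u x s) = fun s => (σ/(σ + 1)) * g x s ^ ((σ + 1)/σ) :=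
    funext fun s => hu x s
  have hdt : deriv (fun s => u x s) t = g x t ^ (1/σ) * deriv (fun s => g x s) t := by
    have hd : DifferentiableAt ℝ (fun s => g x s) t :=
      ((hgt x hx).contDiffAt (hIo.mem_nhds ht)).differentiableAt (by norm_num)
    have h := (hd.hasDerivAt.rpow_const (p := (σ + 1)/σ) (Or.inl hg.ne')).const_mul (σ/(σ + 1))
    rw [hu_t, h.deriv, hp]
    linear_combination (deriv (fun s => g x s) t * g x t ^ (1/σ)) * hc
  have hgrad : ∀ i, pd (fun y => u y t) i x = g x t ^ (1/σ) * pd (fun y => g y t) i x := by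
    intro i
    have hd : DifferentiableAt ℝ (fun y => g y t) x :=
      ((hgx t ht).contDiffAt (hΩ.mem_nhds hx)).differentiableAt (by norm_num)
    rw [hu_x, pd_const_mul_rpow hd hg, hp, hc, one_mul]
  have hsum : ∑ i, (pd (fun y => u y t) i x) ^ 2
      = g x t ^ (2/σ) * ∑ i, (pd (fun y => g y t) i x) ^ 2 := by
    have hsq : (g x t ^ (1/σ)) ^ 2 = g x t ^ (2/σ) := by
      rw [← Real.rpow_natCast, ← Real.rpow_mul hg.le]
      congr 1
      push_cast
      ring
    simp only [hgrad, mul_pow, hsq, Finset.mul_sum]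
  set M : Matrix (Fin n) (Fin n) ℝ := Matrix.of fun i j : Fin n =>
    g x t ^ (1/(n : ℝ)) * hess (fun y => g y t) x i j
      + (1/σ) * g x t ^ (1/(n : ℝ) - 1) * pd (fun y => g y t) i x * pd (fun y => g y t) j x with hM
  have hD2 : (Matrix.of fun i j : Fin n => hess (fun y => u y t) x i j)
      = g x t ^ (1/σ - 1/(n : ℝ)) • M := by
    ext i j
    have h1 : g x t ^ (1/σ) = g x t ^ (1/σ - 1/(n : ℝ)) * g x t ^ (1/(n : ℝ)) := by
      rw [← Real.rpow_add hg]
      congr 1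
      ring
    have h2 : g x t ^ (1/σ - 1) = g x t ^ (1/σ - 1/(n : ℝ)) * g x t ^ (1/(n : ℝ) - 1) := by
      rw [← Real.rpow_add hg]
      congr 1
      ring
    rw [hu_x, Matrix.of_apply, hess_const_mul_rpow hΩ (hgx t ht) (fun y hy => hgpos y hy t ht) hx hσ0,
      Matrix.smul_apply, hM, Matrix.of_apply, smul_eq_mul, h1, h2]
    ring
  have hdetu : (Matrix.of fun i j : Fin n => hess (fun y => u y t) x i j).det ^ α
      = g x t ^ (1/σ) * M.det ^ α := by
    rw [hD2, Matrix.det_smul, Fintype.card_fin,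
      Real.mul_rpow (by positivity) hdet.le, ← Real.rpow_natCast, ← Real.rpow_mul hg.le,
      ← Real.rpow_mul hg.le]
    congr 2
    -- This is the choice of `σ`: `α (n/σ - 1) = α (n - σ)/σ = 1/σ`.
    have h : α * σ = n * α - 1 := by rw [hσ]; field_simp
    field_simp
    linear_combination -h
  rw [hdt, hsum, hdetu, mul_div_assoc]
  exact mul_right_inj' (Real.rpow_pos_of_pos hg _).ne'
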